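/- arXiv:2402.05705 — 2 statements merged into one kernel-verified Lean document; each statement's English description precedes it below -/
import Mathlib

section
/- Let n ≥ 1 and let W ∈ ℝ^{n×n} satisfy W·𝟏 = 𝟏 and 𝟏ᵀ·W = 𝟏ᵀ. Let J ∈ ℝ^{n×n} be the matrix with all entries equal to 1/n. Then the characteristic polynomials satisfy the identity X · charpoly(W) = (X − 1) · charpoly(W − J) in ℝ[X]. (Equivalently: the spectrum of W − J is obtained from that of W by replacing one eigenvalue 1 with 0.) -/
/-!
A rank-one perturbation `W - u vᵀ` along a right eigenvector `u` of `W` moves only the eigenvalue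
belonging to `u` (Brauer). Indeed, if `A u = c u`, then
`[A, -u; vᵀ, 1] * [1, u; 0, c] = [A, 0; vᵀ, c + v ⬝ u]`,
and taking determinants gives `det (A + u vᵀ) * c = det A * (c + v ⬝ u)`. With `A = X - W` over
the polynomial ring this is an identity of characteristic polynomials; the matrix `J` is the case
`u = 𝟏`, `v = 𝟏 / n`.
-/

open Matrix Polynomial

section RankOnePerturbation

variable {ι R : Type*} [Fintype ι] [DecidableEq ι] [CommRing R]

theorem fromBlocks_mul_fromBlocks_of_mulVec_eq_smul {A : Matrix ι ι R} {u : ι → R} {c : R}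
    (hu : A *ᵥ u = c • u) (v : ι → R) :
    fromBlocks A (-replicateCol Unit u) (replicateRow Unit v) 1 *
        fromBlocks 1 (replicateCol Unit u) 0 (scalar Unit c) =
      fromBlocks A 0 (replicateRow Unit v) (scalar Unit (c + v ⬝ᵥ u)) := by
  have upper_right : A * replicateCol Unit u + -replicateCol Unit u * scalar Unit c = 0 := by
    rw [← replicateCol_mulVec, hu]
    ext i j
    simp [mul_comm]
  have lower_right : replicateRow Unit v * replicateCol Unit u + 1 * scalar Unit c =
      scalar Unit (c + v ⬝ᵥ u) := by
    ext i j
    simp [add_comm]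
  rw [fromBlocks_multiply, upper_right, lower_right]
  simp only [Matrix.mul_one, Matrix.mul_zero, add_zero]

theorem det_add_vecMulVec_mul_of_mulVec_eq_smul {A : Matrix ι ι R} {u : ι → R} {c : R}
    (hu : A *ᵥ u = c • u) (v : ι → R) :
    (A + vecMulVec u v).det * c = A.det * (c + v ⬝ᵥ u) := by
  have hdet := congrArg det (fromBlocks_mul_fromBlocks_of_mulVec_eq_smul hu v)
  rw [det_mul, det_fromBlocks_one₂₂, Matrix.neg_mul, sub_neg_eq_add, ← vecMulVec_eq,
    det_fromBlocks_zero₂₁, det_fromBlocks_zero₁₂] at hdet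
  simpa using hdet

theorem charmatrix_mulVec_of_mulVec_eq_smul {W : Matrix ι ι R} {u : ι → R} {μ : R}
    (hu : W *ᵥ u = μ • u) : W.charmatrix *ᵥ (C ∘ u) = (X - C μ) • (C ∘ u) := by
  have hCu : W.map C *ᵥ (C ∘ u) = C μ • (C ∘ u) := by
    ext1 i
    rw [← RingHom.map_mulVec, hu]
    simp
  rw [charmatrix, sub_mulVec, sub_smul, RingHom.mapMatrix_apply, hCu, scalar_apply,
    ← smul_one_eq_diagonal, smul_mulVec, one_mulVec]

theorem charmatrix_sub_vecMulVec (W : Matrix ι ι R) (u v : ι → R) :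
    (W - vecMulVec u v).charmatrix = W.charmatrix + vecMulVec (C ∘ u) (C ∘ v) := by
  ext1 i j
  simp [charmatrix_apply, vecMulVec_apply, sub_add]

theorem stmt1_general {W : Matrix ι ι R} {u : ι → R} {μ : R} (hu : W *ᵥ u = μ • u)
    (v : ι → R) :
    (X - C (μ - v ⬝ᵥ u)) * W.charpoly = (X - C μ) * (W - vecMulVec u v).charpoly := by
  have hdet := det_add_vecMulVec_mul_of_mulVec_eq_smul
    (charmatrix_mulVec_of_mulVec_eq_smul hu) (C ∘ v)
  rw [← charmatrix_sub_vecMulVec, ← RingHom.map_dotProduct] at hdet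
  calc (X - C (μ - v ⬝ᵥ u)) * W.charpoly
      = W.charmatrix.det * (X - C μ + C (v ⬝ᵥ u)) := by rw [charpoly, C_sub]; ring
    _ = (X - C μ) * (W - vecMulVec u v).charpoly := by rw [← hdet, charpoly, mul_comm]

end RankOnePerturbation

/-- If `W · 𝟏 = 𝟏` and `𝟏ᵀ · W = 𝟏ᵀ`, and `J` is the matrix with all
entries `1/n`, then `X · charpoly(W) = (X − 1) · charpoly(W − J)`; i.e. the spectrum
of `W − J` is obtained from that of `W` by replacing one eigenvalue `1` with `0`. -/
theorem stmt1 {n : ℕ} (hn : 1 ≤ n) (W : Matrix (Fin n) (Fin n) ℝ)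
    (h1 : W *ᵥ (fun _ => (1 : ℝ)) = (fun _ => (1 : ℝ)))
    (h2 : (fun _ => (1 : ℝ)) ᵥ* W = (fun _ => (1 : ℝ)))
    (J : Matrix (Fin n) (Fin n) ℝ) (hJ : ∀ i j, J i j = 1 / n) :
    (X : ℝ[X]) * W.charpoly = (X - 1) * (W - J).charpoly := by
  obtain rfl : J = vecMulVec (fun _ => 1) (fun _ => 1 / (n : ℝ)) := by
    ext i j
    rw [hJ, vecMulVec_apply, one_mul]
  simpa [dotProduct, show (n : ℝ) ≠ 0 by positivity] using
    stmt1_general (h1.trans (one_smul ℝ _).symm) (fun _ => 1 / (n : ℝ))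
end

section
/- Let n ≥ 1 and let W ∈ ℝ^{n×n} be symmetric with W·𝟏 = 𝟏, and let J be the n×n matrix with all entries 1/n. Then the following are equivalent: (i) ‖W − J‖₂ < 1; (ii) for every initial vector x ∈ ℝⁿ, the consensus iterates Wᵏ·x converge as k → ∞ to x̄·𝟏, where x̄ = (Σᵢ xᵢ)/n. In particular, if ‖W − J‖₂ ≥ 1 the agents running the consensus protocol do not all converge to the average for every initial condition. -/
open Matrix

/-- The spectral norm (ℓ2 operator norm) of a real square matrix. -/
noncomputable def specNorm {n : ℕ} (M : Matrix (Fin n) (Fin n) ℝ) : ℝ :=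
  ‖Matrix.toEuclideanCLM (𝕜 := ℝ) M‖

/-!
The averaging matrix `J` is the orthogonal projection onto the line spanned by `𝟏`, and `W` fixes
that line. For normal `W` this forces `W J = J W = J`, hence `(W - J) ^ k = W ^ k - J` for `k ≥ 1`,
and `W - J` is again normal. The powers of a normal element of a C⋆-ring tend to `0` exactly when
its norm is less than `1`, because the C⋆-identity gives `‖a ^ k‖² = ‖(a⋆ a) ^ k‖` and
`‖b ^ 2 ^ k‖ = ‖b‖ ^ 2 ^ k` for self-adjoint `b`.
-/

open Filter Topology

section Ring

variable {R : Type*} [Ring R] {a p : R}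

theorem sub_pow_succ_of_isIdempotentElem (hp : IsIdempotentElem p) (hap : a * p = p)
    (hpa : p * a = p) (k : ℕ) : (a - p) ^ (k + 1) = a ^ (k + 1) - p := by
  have hzero : (a - p) * p = 0 := by rw [sub_mul, hap, hp.eq, sub_self]
  induction k with
  | zero => simp only [zero_add, pow_one]
  | succ k ih =>
    calc (a - p) ^ (k + 2)
        = (a - p) ^ (k + 1) * a - (a - p) ^ k * ((a - p) * p) := by
          rw [pow_succ _ (k + 1), mul_sub, ← mul_assoc _ _ p, ← pow_succ]
      _ = a ^ (k + 2) - p := by rw [ih, hzero, mul_zero, sub_zero, sub_mul, hpa, ← pow_succ]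

end Ring

section CStarRing

theorem star_mul_eq_zero_of_mul_eq_zero {A : Type*} [NonUnitalNormedRing A] [StarRing A]
    [CStarRing A] {a b : A} [IsStarNormal a] (h : a * b = 0) : star a * b = 0 := by
  rw [← CStarRing.star_mul_self_eq_zero_iff]
  calc star (star a * b) * (star a * b)
      = star b * (a * star a) * b := by simp only [star_mul, star_star, mul_assoc]
    _ = star b * (star a * (a * b)) := by rw [← star_comm_self' a]; simp only [mul_assoc]
    _ = 0 := by rw [h, mul_zero, mul_zero]

variable {A : Type*} [NormedRing A] [StarRing A] [CStarRing A] {a p : A}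

theorem mul_eq_left_of_mul_eq_right [IsStarNormal a] (hp : IsSelfAdjoint p) (hap : a * p = p) :
    p * a = p := by
  have hker : (1 - a) * p = 0 := by rw [sub_mul, one_mul, hap, sub_self]
  have hker_star : p * (1 - a) = 0 := by
    simpa only [star_mul, star_star, star_zero, hp.star_eq] using
      congrArg star (star_mul_eq_zero_of_mul_eq_zero hker)
  rwa [mul_sub, mul_one, sub_eq_zero, eq_comm] at hker_star

theorem norm_lt_one_of_isSelfAdjoint_of_tendsto_pow (ha : IsSelfAdjoint a)
    (h : Tendsto (fun k : ℕ => a ^ k) atTop (𝓝 0)) : ‖a‖ < 1 := by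
  have hpow : Tendsto (fun k : ℕ => ‖a‖ ^ 2 ^ k) atTop (𝓝 0) := by
    simpa only [Function.comp_def, ha.norm_pow_two_pow, norm_zero] using
      (h.comp (tendsto_pow_atTop_atTop_of_one_lt one_lt_two)).norm
  obtain ⟨k, hk⟩ := (hpow.eventually_lt_const one_pos).exists
  exact (pow_lt_one_iff_of_nonneg (norm_nonneg a) (by positivity)).1 hk

theorem norm_lt_one_iff_tendsto_pow_nhds_zero [IsStarNormal a] :
    ‖a‖ < 1 ↔ Tendsto (fun k : ℕ => a ^ k) atTop (𝓝 0) := by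
  refine ⟨tendsto_pow_atTop_nhds_zero_of_norm_lt_one, fun h => ?_⟩
  have hstar_mul : Tendsto (fun k : ℕ => (star a * a) ^ k) atTop (𝓝 0) := by
    simpa only [(star_comm_self (x := a)).mul_pow, star_pow, star_zero, mul_zero] using h.star.mul h
  have hsq : ‖a‖ * ‖a‖ < 1 := by
    rw [← CStarRing.norm_star_mul_self]
    exact norm_lt_one_of_isSelfAdjoint_of_tendsto_pow (.star_mul_self a) hstar_mul
  rwa [← sq, sq_lt_one_iff₀ (norm_nonneg a)] at hsq

theorem norm_sub_lt_one_iff_tendsto_pow [IsStarNormal a] (hp : IsStarProjection p)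
    (hap : a * p = p) : ‖a - p‖ < 1 ↔ Tendsto (fun k : ℕ => a ^ k) atTop (𝓝 p) := by
  have hpa : p * a = p := mul_eq_left_of_mul_eq_right hp.isSelfAdjoint hap
  have hcomm : Commute a (star p) := by
    rw [hp.isSelfAdjoint.star_eq]
    exact hap.trans hpa.symm
  have : IsStarNormal p := hp.isStarNormal
  have : IsStarNormal (a - p) := hcomm.isStarNormal_sub
  rw [norm_lt_one_iff_tendsto_pow_nhds_zero, ← tendsto_add_atTop_iff_nat 1,
    ← tendsto_add_atTop_iff_nat (f := fun k => a ^ k) 1]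
  simp only [sub_pow_succ_of_isIdempotentElem hp.isIdempotentElem hap hpa]
  exact tendsto_sub_nhds_zero_iff

end CStarRing

theorem tendsto_matrix_iff_forall_tendsto_mulVec {α m n R : Type*} [Fintype n]
    [NonAssocSemiring R] [TopologicalSpace R] [IsTopologicalSemiring R] {l : Filter α}
    {A : α → Matrix m n R} {B : Matrix m n R} :
    Tendsto A l (𝓝 B) ↔ ∀ x : n → R, Tendsto (fun t => A t *ᵥ x) l (𝓝 (B *ᵥ x)) := by
  classical
  refine ⟨fun h x => ?_, fun h => ?_⟩
  · have hcont : Continuous fun M : Matrix m n R => M *ᵥ x := by fun_prop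
    exact (hcont.tendsto B).comp h
  · refine tendsto_pi_nhds.2 fun i => tendsto_pi_nhds.2 fun j => ?_
    simpa only [mulVec_single_one, col_apply] using tendsto_pi_nhds.1 (h (Pi.single j 1)) i

section AveragingMatrix

variable (ι K : Type*) [Fintype ι] [DivisionSemiring K]

/-- The averaging matrix `J`, whose entries are all `1 / |ι|`; it sends a vector to the constant
vector of its mean. It is `0` if `|ι|` vanishes in `K`, by the convention `1 / 0 = 0`. -/
def averagingMatrix : Matrix ι ι K :=
  of fun _ _ => 1 / (Fintype.card ι : K)

variable {ι K}

@[simp]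
theorem averagingMatrix_apply (i j : ι) : averagingMatrix ι K i j = 1 / Fintype.card ι :=
  rfl

theorem averagingMatrix_mulVec (x : ι → K) :
    averagingMatrix ι K *ᵥ x = fun _ => (∑ i, x i) / Fintype.card ι := by
  ext
  simp only [mulVec, dotProduct, averagingMatrix_apply, ← Finset.mul_sum]
  rw [one_div, div_eq_mul_inv, (Nat.cast_commute (Fintype.card ι) _).inv_left₀.eq]

theorem isStarProjection_averagingMatrix [StarRing K] :
    IsStarProjection (averagingMatrix ι K) where
  isIdempotentElem := by
    ext
    simp only [mul_apply, averagingMatrix_apply, Finset.sum_const, Finset.card_univ, nsmul_eq_mul,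
      one_div]
    by_cases hcard : (Fintype.card ι : K) = 0
    · simp [hcard]
    · exact mul_inv_cancel_left₀ hcard _
  isSelfAdjoint := by
    ext
    simp [star_apply]

theorem mul_averagingMatrix {A : Matrix ι ι K} (hA : A *ᵥ 1 = 1) :
    A * averagingMatrix ι K = averagingMatrix ι K := by
  ext i j
  have hrow : ∑ k, A i k = 1 := by
    simpa only [mulVec, dotProduct_one, Pi.one_apply] using congrFun hA i
  simp only [mul_apply, averagingMatrix_apply, ← Finset.sum_mul, hrow, one_mul]

end AveragingMatrix

open scoped Matrix.Norms.L2Operator in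
theorem stmt4_general {ι 𝕜 : Type*} [Fintype ι] [DecidableEq ι] [RCLike 𝕜] (W : Matrix ι ι 𝕜)
    [IsStarNormal W] (h1 : W *ᵥ 1 = 1) :
    ‖W - averagingMatrix ι 𝕜‖ < 1 ↔
      ∀ x : ι → 𝕜, Tendsto (fun k : ℕ => (W ^ k) *ᵥ x) atTop
        (𝓝 (fun _ => (∑ i, x i) / Fintype.card ι)) := by
  simp only [← averagingMatrix_mulVec]
  rw [← tendsto_matrix_iff_forall_tendsto_mulVec]
  exact norm_sub_lt_one_iff_tendsto_pow isStarProjection_averagingMatrix (mul_averagingMatrix h1)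

/-- for a symmetric matrix `W` with `W·𝟏 = 𝟏`, the condition
`‖W − J‖₂ < 1` holds if and only if, for every initial vector `x`, the consensus
iterates `Wᵏ x` converge to the average vector `x̄·𝟏` as `k → ∞`. -/
theorem stmt4 {n : ℕ} (hn : 1 ≤ n) (W : Matrix (Fin n) (Fin n) ℝ)
    (hsym : Wᵀ = W)
    (h1 : W *ᵥ (fun _ => (1 : ℝ)) = (fun _ => (1 : ℝ)))
    (J : Matrix (Fin n) (Fin n) ℝ) (hJ : ∀ i j, J i j = 1 / n) :
    specNorm (W - J) < 1 ↔
      ∀ x : Fin n → ℝ, Filter.Tendsto (fun k : ℕ => (W ^ k) *ᵥ x)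
        Filter.atTop (nhds (fun _ => (∑ i, x i) / n)) := by
  obtain rfl : J = averagingMatrix (Fin n) ℝ := by ext; simp [hJ]
  have : IsStarNormal W :=
    IsSelfAdjoint.isStarNormal ((conjTranspose_eq_transpose_of_trivial W).trans hsym)
  simpa only [specNorm, cstar_norm_def, Fintype.card_fin] using stmt4_general W h1
end
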